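/- Let G₂ be a group acting on a unital C*-algebra C, and let G₁ ≤ G₂ be a subgroup of finite index n. Then the reduced crossed product C ⋊ᵣ G₂ embeds as a C*-subalgebra of (C ⋊ᵣ G₁) ⊗ Mₙ(ℂ), where Mₙ(ℂ) is the algebra of n×n complex matrices. -/

import Mathlib

/-- `(T, ι, u)` realizes the reduced crossed product `A ⋊ᵣ G` of the action `α` of the
discrete group `G` on the unital C*-algebra `A`: `ι : A → T` is a unital *-homomorphism,
`u : G → T` is a unitary representation implementing `α`, the elements `ι(a) u_g` span a
dense subspace of `T`, and there is a faithful conditional expectation `E : T → A`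
vanishing on `ι(a) u_g` for `g ≠ 1`.  (These properties characterize the reduced crossed
product among C*-completions of the algebraic crossed product.) -/
structure IsReducedCrossedProduct (G : Type*) [Group G] {A T : Type*}
    [CStarAlgebra A] [CStarAlgebra T]
    (α : G → A ≃⋆ₐ[ℂ] A) (ι : A →⋆ₐ[ℂ] T) (u : G → T) : Prop where
  action_one : ∀ x : A, α 1 x = x
  action_mul : ∀ (g h : G) (x : A), α (g * h) x = α g (α h x)
  unitary : ∀ g, u g ∈ unitary T
  u_one : u 1 = 1
  u_mul : ∀ g h, u (g * h) = u g * u h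
  covariant : ∀ (g : G) (a : A), u g * ι a * star (u g) = ι (α g a)
  generates :
    Dense ((Submodule.span ℂ {x : T | ∃ (a : A) (g : G), x = ι a * u g} : Submodule ℂ T) : Set T)
  expectation : ∃ E : T →ₗ[ℂ] A, (∀ x, ‖E x‖ ≤ ‖x‖) ∧ (∀ a, E (ι a) = a) ∧
    (∀ (a : A) (g : G), g ≠ 1 → E (ι a * u g) = 0) ∧
    (∀ (a : A) (x : T) (b : A), E (ι a * x * ι b) = a * E x * b) ∧
    (∀ x, ∃ y, E (star x * x) = star y * y) ∧
    (∀ x, E (star x * x) = 0 → x = 0)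

/-!
A covariant representation that carries a faithful conditional expectation `F` already contains
the reduced crossed product. Indeed, `E x = F y` for all `(x, y)` in the closed *-algebra
generated by the pairs `(ι a * u g, π a * v g)`, so that by faithfulness `x` and `y` vanish together
and this algebra is the graph of an isometry.

Such a representation in `Mₙ(A ⋊ᵣ G₁)` is induced from `G₁`: with left coset representatives `sᵢ`,
send `g` to the matrix with entries `u₁ (sᵢ⁻¹ g sⱼ)`, read as `0` off `G₁`, and `a` to
`diag (ι₁ (α sᵢ⁻¹ a))`. Its expectation averages the elements `α sᵢ (E₁ xᵢᵢ)`.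
-/

section CovariantRepresentation

variable {R G A B C : Type*} [CommSemiring R] [Group G]
  [Semiring A] [StarRing A] [Algebra R A] [Semiring B] [StarRing B] [Algebra R B]
  [Semiring C] [StarRing C] [Algebra R C]

/-- A covariant representation `(π, u)` of `(A, G, α)` in a unital *-algebra `B`. As in
`IsReducedCrossedProduct`, `u` is an unbundled function; its unitarity is `star_apply`. -/
structure IsCovariantRep (α : G → A ≃⋆ₐ[R] A) (π : A →⋆ₐ[R] B) (u : G → B) : Prop where
  map_one : u 1 = 1
  map_mul : ∀ g h, u (g * h) = u g * u h
  star_apply : ∀ g, star (u g) = u g⁻¹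
  mul_comm : ∀ g a, u g * π a = π (α g a) * u g

namespace IsCovariantRep

variable {α : G → A ≃⋆ₐ[R] A} {π : A →⋆ₐ[R] B} {u : G → B}

theorem map (h : IsCovariantRep α π u) (φ : B →⋆ₐ[R] C) :
    IsCovariantRep α (φ.comp π) (φ ∘ u) where
  map_one := by simp [h.map_one]
  map_mul g k := by simp [h.map_mul]
  star_apply g := by simp [← map_star, h.star_apply]
  mul_comm g a := by simp [← _root_.map_mul, h.mul_comm]

theorem prod {σ : A →⋆ₐ[R] C} {v : G → C} (h : IsCovariantRep α π u)
    (k : IsCovariantRep α σ v) : IsCovariantRep α (π.prod σ) fun g => (u g, v g) where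
  map_one := Prod.ext h.map_one k.map_one
  map_mul g g' := Prod.ext (h.map_mul g g') (k.map_mul g g')
  star_apply g := Prod.ext (h.star_apply g) (k.star_apply g)
  mul_comm g a := Prod.ext (h.mul_comm g a) (k.mul_comm g a)

/-- The monomials `π a * u g` of a covariant representation, whose span is the *-algebra that
the representation generates. -/
def monomials (h : IsCovariantRep α π u) : Submonoid B where
  carrier := {x | ∃ (a : A) (g : G), x = π a * u g}
  one_mem' := ⟨1, 1, by simp [h.map_one]⟩
  mul_mem' := by
    rintro _ _ ⟨a, g, rfl⟩ ⟨b, k, rfl⟩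
    refine ⟨a * α g b, g * k, ?_⟩
    calc π a * u g * (π b * u k) = π a * (u g * π b) * u k := by simp only [mul_assoc]
      _ = π (a * α g b) * u (g * k) := by
        simp only [h.mul_comm, h.map_mul, _root_.map_mul, mul_assoc]

theorem star_mem_monomials (h : IsCovariantRep α π u) {x : B} (hx : x ∈ h.monomials) :
    star x ∈ h.monomials := by
  obtain ⟨a, g, rfl⟩ := hx
  exact ⟨α g⁻¹ (star a), g⁻¹, by rw [star_mul, h.star_apply, ← map_star, h.mul_comm]⟩

variable [StarRing R] [StarModule R B]

theorem coe_adjoin_monomials (h : IsCovariantRep α π u) :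
    (StarAlgebra.adjoin R (h.monomials : Set B) : Set B) =
      Submodule.span R {x | ∃ (a : A) (g : G), x = π a * u g} := by
  have hstar : star (h.monomials : Set B) ⊆ h.monomials := fun x hx => by
    simpa using h.star_mem_monomials hx
  have hspan := StarAlgebra.adjoin_eq_span (R := R) (h.monomials : Set B)
  rw [Set.union_eq_self_of_subset_right hstar, Submonoid.closure_eq] at hspan
  exact congrArg SetLike.coe hspan

variable [TopologicalSpace B] [IsSemitopologicalSemiring B] [ContinuousStar B]

/-- The closed *-algebra generated by a covariant representation: the associated completion of
the algebraic crossed product when `B` is a C*-algebra. -/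
def closedAdjoin (h : IsCovariantRep α π u) : StarSubalgebra R B :=
  (StarAlgebra.adjoin R (h.monomials : Set B)).topologicalClosure

theorem isClosed_closedAdjoin (h : IsCovariantRep α π u) : IsClosed (h.closedAdjoin : Set B) :=
  StarSubalgebra.isClosed_topologicalClosure _

theorem mul_mem_closedAdjoin (h : IsCovariantRep α π u) (a : A) (g : G) :
    π a * u g ∈ h.closedAdjoin :=
  StarSubalgebra.le_topologicalClosure _ (StarAlgebra.subset_adjoin R _ ⟨a, g, rfl⟩)

theorem closedAdjoin_subset (h : IsCovariantRep α π u) {p : Submodule R B}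
    (hp : IsClosed (p : Set B)) (hmono : ∀ a g, π a * u g ∈ p) :
    (h.closedAdjoin : Set B) ⊆ p := by
  refine closure_minimal ?_ hp
  rw [h.coe_adjoin_monomials]
  refine Submodule.span_le.2 ?_
  rintro _ ⟨a, g, rfl⟩
  exact hmono a g

end IsCovariantRep

end CovariantRepresentation

section FaithfulExpectation

variable {G A B C : Type*} [Group G] [Semiring A] [StarRing A] [Algebra ℂ A] [PartialOrder A]
  [TopologicalSpace A] [Semiring B] [StarRing B] [Algebra ℂ B] [TopologicalSpace B]
  [Semiring C] [StarRing C] [Algebra ℂ C] [TopologicalSpace C]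

/-- A continuous faithful positive map `E : B → A` that reads off the coefficient at `1 : G` of a
linear combination of monomials `π a * u g`: the canonical expectation of a crossed product. -/
structure IsFaithfulExpectation (π : A →⋆ₐ[ℂ] B) (u : G → B) (E : B →L[ℂ] A) : Prop where
  apply_map : ∀ a, E (π a) = a
  apply_mul_of_ne_one : ∀ a g, g ≠ 1 → E (π a * u g) = 0
  nonneg : ∀ x, 0 ≤ E (star x * x)
  faithful : ∀ x, E (star x * x) = 0 → x = 0

theorem IsFaithfulExpectation.of_comp {π : A →⋆ₐ[ℂ] B} {u : G → B} {E : C →L[ℂ] A}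
    {φ : B →⋆ₐ[ℂ] C} (hφ : Continuous φ) (hinj : Function.Injective φ)
    (hE : IsFaithfulExpectation (φ.comp π) (φ ∘ u) E) :
    IsFaithfulExpectation π u (E.comp ⟨φ.toAlgHom.toLinearMap, hφ⟩) where
  apply_map := hE.apply_map
  apply_mul_of_ne_one a g hg :=
    (congrArg E (map_mul φ (π a) (u g))).trans (hE.apply_mul_of_ne_one a g hg)
  nonneg x := by
    change 0 ≤ E (φ (star x * x))
    rw [map_mul, map_star]
    exact hE.nonneg (φ x)
  faithful x hx := by
    change E (φ (star x * x)) = 0 at hx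
    rw [map_mul, map_star] at hx
    exact (map_eq_zero_iff φ hinj).1 (hE.faithful (φ x) hx)

theorem IsFaithfulExpectation.apply_fst_eq_apply_snd [T2Space A] [StarModule ℂ B]
    [IsSemitopologicalSemiring B] [ContinuousStar B] [StarModule ℂ C]
    [IsSemitopologicalSemiring C] [ContinuousStar C] {α : G → A ≃⋆ₐ[ℂ] A}
    {π : A →⋆ₐ[ℂ] B} {u : G → B} {E : B →L[ℂ] A} {σ : A →⋆ₐ[ℂ] C} {v : G → C} {F : C →L[ℂ] A}
    (hE : IsFaithfulExpectation π u E) (hF : IsFaithfulExpectation σ v F)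
    (hπ : IsCovariantRep α π u) (hσ : IsCovariantRep α σ v) {x : B × C}
    (hx : x ∈ (hπ.prod hσ).closedAdjoin) : E x.1 = F x.2 := by
  let p : Submodule ℂ (B × C) :=
    (E.toLinearMap ∘ₗ .fst ℂ B C).eqLocus (F.toLinearMap ∘ₗ .snd ℂ B C)
  have hp : IsClosed (p : Set (B × C)) :=
    isClosed_eq (E.continuous.comp continuous_fst) (F.continuous.comp continuous_snd)
  refine (hπ.prod hσ).closedAdjoin_subset hp (fun a g => ?_) hx
  change E (π a * u g) = F (σ a * v g)
  obtain rfl | hg := eq_or_ne g 1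
  · rw [hπ.map_one, hσ.map_one, mul_one, mul_one, hE.apply_map, hF.apply_map]
  · rw [hE.apply_mul_of_ne_one a g hg, hF.apply_mul_of_ne_one a g hg]

end FaithfulExpectation

section ReducedCrossedProduct

/-- The first projection of the graph is isometric with closed dense range, hence invertible. -/
theorem exists_injective_starAlgHom_of_isClosed_graph {B C : Type*} [CStarAlgebra B]
    [CStarAlgebra C] (D : StarSubalgebra ℂ (B × C)) (hD : IsClosed (D : Set (B × C)))
    (hfst : ∀ x ∈ D, x.1 = 0 → x.2 = 0) (hsnd : ∀ x ∈ D, x.2 = 0 → x.1 = 0)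
    (hdense : Dense (Prod.fst '' (D : Set (B × C)))) :
    ∃ f : B →⋆ₐ[ℂ] C, Function.Injective f ∧ ∀ x ∈ D, f x.1 = x.2 := by
  let : CStarAlgebra D := StarSubalgebra.cstarAlgebra D (h_closed := hD)
  let p : D →⋆ₐ[ℂ] B := (StarAlgHom.fst ℂ B C).comp D.subtype
  let q : D →⋆ₐ[ℂ] C := (StarAlgHom.snd ℂ B C).comp D.subtype
  have hp : Function.Injective p := (injective_iff_map_eq_zero p).2 fun x hx =>
    Subtype.ext (Prod.ext hx (hfst x x.2 hx))
  have hq : Function.Injective q := (injective_iff_map_eq_zero q).2 fun x hx =>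
    Subtype.ext (Prod.ext (hsnd x x.2 hx) hx)
  have hp_range : IsClosed (Set.range p) :=
    (NonUnitalStarAlgHom.isometry p hp).isClosedEmbedding.isClosed_range
  have hp_dense : Dense (Set.range p) := by
    rwa [Set.image_eq_range] at hdense
  have hp_surj : Function.Surjective p := by
    rw [← Set.range_eq_univ, ← hp_range.closure_eq, hp_dense.closure_eq]
  let e : D ≃⋆ₐ[ℂ] B := StarAlgEquiv.ofBijective p ⟨hp, hp_surj⟩
  exact ⟨q.comp (e.symm : B →⋆ₐ[ℂ] D), hq.comp e.symm.injective,
    fun x hx => congrArg q (e.symm_apply_apply ⟨x, hx⟩)⟩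

namespace IsReducedCrossedProduct

variable {G A B T : Type*} [Group G] [CStarAlgebra A] [CStarAlgebra B] [CStarAlgebra T]
  {α : G → A ≃⋆ₐ[ℂ] A} {ι : A →⋆ₐ[ℂ] T} {u : G → T}

theorem isCovariantRep (h : IsReducedCrossedProduct G α ι u) : IsCovariantRep α ι u where
  map_one := h.u_one
  map_mul := h.u_mul
  star_apply g := by
    have hinv : u g * u g⁻¹ = 1 := by rw [← h.u_mul, mul_inv_cancel, h.u_one]
    exact left_inv_eq_right_inv (Unitary.star_mul_self_of_mem (h.unitary g)) hinv
  mul_comm g a := by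
    rw [← h.covariant, mul_assoc (u g * ι a), Unitary.star_mul_self_of_mem (h.unitary g), mul_one]

theorem dense_fst_closedAdjoin (h : IsReducedCrossedProduct G α ι u) {π : A →⋆ₐ[ℂ] B} {v : G → B}
    (hπ : IsCovariantRep α π v) :
    Dense (Prod.fst '' ((h.isCovariantRep.prod hπ).closedAdjoin : Set (T × B))) := by
  let p : Submodule ℂ (T × B) :=
    Subalgebra.toSubmodule (h.isCovariantRep.prod hπ).closedAdjoin.toSubalgebra
  have hspan : Submodule.span ℂ {x | ∃ (a : A) (g : G), x = ι a * u g} ≤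
      p.map (LinearMap.fst ℂ T B) := by
    refine Submodule.span_le.2 ?_
    rintro _ ⟨a, g, rfl⟩
    exact ⟨_, (h.isCovariantRep.prod hπ).mul_mem_closedAdjoin a g, rfl⟩
  exact h.generates.mono hspan

variable [PartialOrder A] [StarOrderedRing A]

theorem exists_isFaithfulExpectation (h : IsReducedCrossedProduct G α ι u) :
    ∃ E : T →L[ℂ] A, IsFaithfulExpectation ι u E := by
  obtain ⟨E, hnorm, hι, hne, -, hpos, hfaithful⟩ := h.expectation
  refine ⟨E.mkContinuous 1 fun x => by simpa using hnorm x, hι, hne, fun x => ?_, hfaithful⟩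
  obtain ⟨y, hy⟩ := hpos x
  exact hy.symm ▸ star_mul_self_nonneg y

theorem exists_injective_starAlgHom (h : IsReducedCrossedProduct G α ι u) {π : A →⋆ₐ[ℂ] B}
    {v : G → B} (hπ : IsCovariantRep α π v) {F : B →L[ℂ] A} (hF : IsFaithfulExpectation π v F) :
    ∃ f : T →⋆ₐ[ℂ] B, Function.Injective f ∧ (∀ a, f (ι a) = π a) ∧ ∀ g, f (u g) = v g := by
  obtain ⟨E, hE⟩ := h.exists_isFaithfulExpectation
  let D := (h.isCovariantRep.prod hπ).closedAdjoin
  have hexp (x) (hx : x ∈ D) : E (star x.1 * x.1) = F (star x.2 * x.2) :=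
    hE.apply_fst_eq_apply_snd hF h.isCovariantRep hπ (mul_mem (star_mem hx) hx)
  have hfst (x) (hx : x ∈ D) (hx₁ : x.1 = 0) : x.2 = 0 :=
    hF.faithful x.2 (by rw [← hexp x hx, hx₁, mul_zero, map_zero])
  have hsnd (x) (hx : x ∈ D) (hx₂ : x.2 = 0) : x.1 = 0 :=
    hE.faithful x.1 (by rw [hexp x hx, hx₂, mul_zero, map_zero])
  obtain ⟨f, hf, hfD⟩ := exists_injective_starAlgHom_of_isClosed_graph D
    (IsCovariantRep.isClosed_closedAdjoin _) hfst hsnd (h.dense_fst_closedAdjoin hπ)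
  have hmono (a : A) (g : G) : f (ι a * u g) = π a * v g :=
    hfD _ ((h.isCovariantRep.prod hπ).mul_mem_closedAdjoin a g)
  refine ⟨f, hf, fun a => ?_, fun g => ?_⟩
  · simpa [h.u_one, hπ.map_one] using hmono a 1
  · simpa using hmono 1 g

end IsReducedCrossedProduct

end ReducedCrossedProduct

section Diagonal

variable {R G I A T : Type*} [CommSemiring R] [Semiring A] [StarRing A] [Algebra R A]
  [Semiring T] [StarRing T] [Algebra R T] [Fintype I] [DecidableEq I]

/-- The diagonal sum `a ↦ diag (φ i a)` of a finite family of *-homomorphisms. -/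
def diagonalStarAlgHom (φ : I → A →⋆ₐ[R] T) : A →⋆ₐ[R] Matrix I I T where
  __ := (Matrix.diagonalAlgHom R).comp (AlgHom.pi fun i => (φ i).toAlgHom)
  map_star' a := by
    change Matrix.diagonal (fun i => φ i (star a)) = star (Matrix.diagonal fun i => φ i a)
    rw [Matrix.star_eq_conjTranspose, Matrix.diagonal_conjTranspose]
    exact congrArg Matrix.diagonal (funext fun i => map_star (φ i) a)

/-- The representation `a ↦ diag (π ((α (s i)).symm a))` of `A` that accompanies the induced
matrices of a representation of a subgroup with left coset representatives `s i`. -/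
def inducedDiagonal (α : G → A ≃⋆ₐ[R] A) (s : I → G) (π : A →⋆ₐ[R] T) :
    A →⋆ₐ[R] Matrix I I T :=
  diagonalStarAlgHom fun i => π.comp ((α (s i)).symm : A →⋆ₐ[R] A)

theorem inducedDiagonal_apply (α : G → A ≃⋆ₐ[R] A) (s : I → G) (π : A →⋆ₐ[R] T) (a : A) :
    inducedDiagonal α s π a = Matrix.diagonal fun i => π ((α (s i)).symm a) := rfl

end Diagonal

section InducedRepresentation

variable {G I T : Type*} [Group G] {H : Subgroup G} {s : I → G} {u : H → T}

/-- The representation of `G` by matrices induced from a representation `u` of the subgroup `H`,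
with respect to the representatives `s i` of the left cosets of `H`; `u` is extended to `G` by
zero. -/
noncomputable def inducedMatrix [Zero T] (s : I → G) (u : H → T) (g : G) : Matrix I I T :=
  .of fun i j => Function.extend Subtype.val u 0 ((s i)⁻¹ * g * s j)

theorem inducedMatrix_apply_of_eq [Zero T] {g : G} {i j : I} {x : H}
    (hx : (s i)⁻¹ * g * s j = x) : inducedMatrix s u g i j = u x := by
  rw [inducedMatrix, Matrix.of_apply, hx, Subtype.val_injective.extend_apply]

theorem inducedMatrix_apply_of_notMem [Zero T] {g : G} {i j : I}
    (hg : (s i)⁻¹ * g * s j ∉ H) : inducedMatrix s u g i j = 0 :=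
  Function.extend_apply' _ _ _ fun ⟨x, hx⟩ => hg (hx ▸ x.2)

theorem inducedMatrix_one [DecidableEq I] [MulZeroOneClass T]
    (hs : Function.Injective fun i => (s i : G ⧸ H)) (hu : u 1 = 1) :
    inducedMatrix s u 1 = 1 := by
  ext i j
  obtain rfl | hij := eq_or_ne i j
  · rw [Matrix.one_apply_eq, inducedMatrix_apply_of_eq (x := 1) (by simp), hu]
  · rw [Matrix.one_apply_ne hij, inducedMatrix_apply_of_notMem]
    rw [mul_one, ← QuotientGroup.eq]
    exact fun h => hij (hs h)

theorem inducedMatrix_mul [Fintype I] [NonUnitalNonAssocSemiring T]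
    (hs : Function.Bijective fun i => (s i : G ⧸ H)) (hu : ∀ x y, u (x * y) = u x * u y)
    (g h : G) : inducedMatrix s u (g * h) = inducedMatrix s u g * inducedMatrix s u h := by
  ext i j
  obtain ⟨k, hk⟩ := hs.surjective (h * s j : G)
  have hmem (l : I) : (s l)⁻¹ * h * s j ∈ H ↔ l = k := by
    rw [mul_assoc, ← QuotientGroup.eq, ← hk]
    exact hs.injective.eq_iff
  rw [Matrix.mul_apply, Finset.sum_eq_single k (fun l _ hl => by
    rw [inducedMatrix_apply_of_notMem (g := h) (mt (hmem l).1 hl), mul_zero]) (by simp)]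
  let y : H := ⟨(s k)⁻¹ * h * s j, (hmem k).2 rfl⟩
  have hfactor : (s i)⁻¹ * (g * h) * s j = (s i)⁻¹ * g * s k * y := by simp [y, mul_assoc]
  rw [inducedMatrix_apply_of_eq (g := h) (x := y) rfl]
  by_cases hx : (s i)⁻¹ * g * s k ∈ H
  · rw [inducedMatrix_apply_of_eq (x := ⟨_, hx⟩) rfl, ← hu]
    exact inducedMatrix_apply_of_eq hfactor
  · rw [inducedMatrix_apply_of_notMem hx, zero_mul, inducedMatrix_apply_of_notMem]
    rwa [hfactor, H.mul_mem_cancel_right y.2]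

theorem star_inducedMatrix [AddMonoid T] [StarAddMonoid T] (hu : ∀ x, star (u x) = u x⁻¹)
    (g : G) : star (inducedMatrix s u g) = inducedMatrix s u g⁻¹ := by
  ext i j
  rw [Matrix.star_apply]
  have hinv : (s i)⁻¹ * g⁻¹ * s j = ((s j)⁻¹ * g * s i)⁻¹ := by group
  by_cases hx : (s j)⁻¹ * g * s i ∈ H
  · rw [inducedMatrix_apply_of_eq (x := ⟨_, hx⟩) rfl, hu]
    exact (inducedMatrix_apply_of_eq hinv).symm
  · rw [inducedMatrix_apply_of_notMem hx, star_zero, inducedMatrix_apply_of_notMem]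
    rwa [hinv, inv_mem_iff]

theorem exists_leftCoset_representatives {n : ℕ} (hn : n ≠ 0) (hidx : H.index = n) :
    ∃ s : Fin n → G, Function.Bijective fun i => (s i : G ⧸ H) := by
  have : H.FiniteIndex := ⟨hidx ▸ hn⟩
  let e : G ⧸ H ≃ Fin n := Finite.equivFinOfCardEq hidx
  exact ⟨fun i => (e.symm i).out, by simpa using e.symm.bijective⟩

variable {R A : Type*} [CommSemiring R] [Semiring A] [StarRing A] [Algebra R A]
  [Semiring T] [StarRing T] [Algebra R T] [Fintype I] [DecidableEq I]

theorem IsCovariantRep.induced {α : G → A ≃⋆ₐ[R] A} {π : A →⋆ₐ[R] T}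
    (hα : ∀ g h x, α (g * h) x = α g (α h x))
    (h : IsCovariantRep (fun x : H => α x) π u)
    (hs : Function.Bijective fun i => (s i : G ⧸ H)) :
    IsCovariantRep α (inducedDiagonal α s π) (inducedMatrix s u) where
  map_one := inducedMatrix_one hs.injective h.map_one
  map_mul := inducedMatrix_mul hs h.map_mul
  star_apply := star_inducedMatrix h.star_apply
  mul_comm g a := by
    ext i j
    rw [inducedDiagonal_apply, inducedDiagonal_apply, Matrix.mul_diagonal, Matrix.diagonal_mul]
    by_cases hx : (s i)⁻¹ * g * s j ∈ H
    · have hα_symm : α ((s i)⁻¹ * g * s j) ((α (s j)).symm a) = (α (s i)).symm (α g a) := by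
        rw [StarAlgEquiv.eq_symm_apply, ← hα, mul_assoc, mul_inv_cancel_left, hα,
          StarAlgEquiv.apply_symm_apply]
      rw [inducedMatrix_apply_of_eq (x := ⟨_, hx⟩) rfl, h.mul_comm, hα_symm]
    · rw [inducedMatrix_apply_of_notMem hx, zero_mul, mul_zero]

end InducedRepresentation

section PositiveMap

variable {F I J A T : Type*} [Fintype I] [NonUnitalNonAssocSemiring T] [StarRing T]
  [AddCommMonoid A] [PartialOrder A] [IsOrderedAddMonoid A] [FunLike F T A]
  [AddMonoidHomClass F T A] {E : F}

open scoped Matrix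

theorem map_conjTranspose_mul_self_diag_nonneg (hpos : ∀ x, 0 ≤ E (star x * x))
    (x : Matrix I J T) (j : J) : 0 ≤ E ((xᴴ * x) j j) := by
  simpa only [Matrix.mul_apply, Matrix.conjTranspose_apply, map_sum] using
    Finset.sum_nonneg fun k _ => hpos (x k j)

theorem eq_zero_of_map_conjTranspose_mul_self_diag (hpos : ∀ x, 0 ≤ E (star x * x))
    (hfaithful : ∀ x, E (star x * x) = 0 → x = 0) {x : Matrix I J T}
    (hx : ∀ j, E ((xᴴ * x) j j) = 0) : x = 0 := by
  ext k j
  have hsum : ∑ k, E (star (x k j) * x k j) = 0 := by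
    simpa only [Matrix.mul_apply, Matrix.conjTranspose_apply, map_sum] using hx j
  exact hfaithful _
    ((Finset.sum_eq_zero_iff_of_nonneg fun k _ => hpos (x k j)).1 hsum k (Finset.mem_univ k))

end PositiveMap

section InducedExpectation

variable {G I A T : Type*} [Fintype I] [CStarAlgebra A] [Semiring T] [Algebra ℂ T]
  [TopologicalSpace T]

/-- The average of the diagonal entries of a matrix over `T`, each mapped to `A` by `E` and
moved back by `α (s i)`; it is the canonical expectation of the induced representation. -/
noncomputable def inducedExpectation (α : G → A ≃⋆ₐ[ℂ] A) (s : I → G) (E : T →L[ℂ] A) :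
    Matrix I I T →L[ℂ] A where
  toFun x := (Fintype.card I : ℝ)⁻¹ • ∑ i, α (s i) (E (x i i))
  map_add' x y := by simp [Finset.sum_add_distrib]
  map_smul' c x := by simp [Finset.smul_sum, smul_comm c]
  cont := by
    have hα (i : I) : Continuous (α (s i)) :=
      (NonUnitalStarAlgHom.isometry (α (s i)) (α (s i)).injective).continuous
    fun_prop

theorem inducedExpectation_apply (α : G → A ≃⋆ₐ[ℂ] A) (s : I → G) (E : T →L[ℂ] A)
    (x : Matrix I I T) :
    inducedExpectation α s E x = (Fintype.card I : ℝ)⁻¹ • ∑ i, α (s i) (E (x i i)) := rfl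

theorem IsFaithfulExpectation.induced [Group G] [StarRing T] [PartialOrder A] [StarOrderedRing A]
    [DecidableEq I] [Nonempty I] {H : Subgroup G} {s : I → G} {π : A →⋆ₐ[ℂ] T} {u : H → T}
    {E : T →L[ℂ] A} (hE : IsFaithfulExpectation π u E) (α : G → A ≃⋆ₐ[ℂ] A) :
    IsFaithfulExpectation (inducedDiagonal α s π) (inducedMatrix s u)
      (inducedExpectation α s E) where
  apply_map a := by
    simp only [inducedExpectation_apply, inducedDiagonal_apply, Matrix.diagonal_apply_eq,
      hE.apply_map, StarAlgEquiv.apply_symm_apply, Finset.sum_const, Finset.card_univ,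
      ← Nat.cast_smul_eq_nsmul ℝ]
    exact inv_smul_smul₀ (Nat.cast_ne_zero.2 Fintype.card_ne_zero) a
  apply_mul_of_ne_one a g hg := by
    rw [inducedExpectation_apply, Finset.sum_eq_zero, smul_zero]
    intro i _
    rw [inducedDiagonal_apply, Matrix.diagonal_mul]
    by_cases hx : (s i)⁻¹ * g * s i ∈ H
    · have hx_ne : (⟨_, hx⟩ : H) ≠ 1 := fun h => hg <| by
        simpa [mul_assoc, inv_mul_eq_one] using congrArg Subtype.val h
      rw [inducedMatrix_apply_of_eq (x := ⟨_, hx⟩) rfl, hE.apply_mul_of_ne_one _ _ hx_ne, map_zero]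
    · rw [inducedMatrix_apply_of_notMem hx, mul_zero, map_zero, map_zero]
  nonneg x := by
    rw [inducedExpectation_apply]
    exact smul_nonneg (by positivity) <| Finset.sum_nonneg fun i _ =>
      map_nonneg (α (s i)) (map_conjTranspose_mul_self_diag_nonneg hE.nonneg x i)
  faithful x hx := by
    rw [inducedExpectation_apply] at hx
    have hsum : ∑ i, α (s i) (E ((star x * x) i i)) = 0 :=
      (smul_eq_zero_iff_right (inv_ne_zero (Nat.cast_ne_zero.2 Fintype.card_ne_zero))).1 hx
    refine eq_zero_of_map_conjTranspose_mul_self_diag hE.nonneg hE.faithful fun i => ?_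
    refine (map_eq_zero_iff (α (s i)) (α (s i)).injective).1 ?_
    exact (Finset.sum_eq_zero_iff_of_nonneg fun i _ =>
      map_nonneg (α (s i)) (map_conjTranspose_mul_self_diag_nonneg hE.nonneg x i)).1 hsum i
      (Finset.mem_univ i)

end InducedExpectation

theorem reduced_crossedProduct_embeds_matrix_general {G I A T₂ T₁ : Type*} [Group G]
    {H : Subgroup G} [Fintype I] [DecidableEq I] [CStarAlgebra A] [PartialOrder A]
    [StarOrderedRing A] [CStarAlgebra T₂] [CStarAlgebra T₁] {α : G → A ≃⋆ₐ[ℂ] A}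
    {ι₂ : A →⋆ₐ[ℂ] T₂} {u₂ : G → T₂} (h₂ : IsReducedCrossedProduct G α ι₂ u₂)
    {ι₁ : A →⋆ₐ[ℂ] T₁} {u₁ : H → T₁} (h₁ : IsCovariantRep (fun x : H => α x) ι₁ u₁)
    {E₁ : T₁ →L[ℂ] A} (hE₁ : IsFaithfulExpectation ι₁ u₁ E₁)
    {s : I → G} (hs : Function.Bijective fun i => (s i : G ⧸ H)) :
    ∃ f : T₂ →⋆ₐ[ℂ] Matrix I I T₁, Function.Injective f ∧
      (∀ a, f (ι₂ a) = inducedDiagonal α s ι₁ a) ∧ ∀ g, f (u₂ g) = inducedMatrix s u₁ g := by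
  let := CStarAlgebra.spectralOrder T₁
  have := CStarAlgebra.spectralOrderedRing T₁
  have : Nonempty I := hs.surjective.nonempty
  let Φ : Matrix I I T₁ ≃⋆ₐ[ℂ] CStarMatrix I I T₁ := CStarMatrix.ofMatrixStarAlgEquiv
  let φ : Matrix I I T₁ →⋆ₐ[ℂ] CStarMatrix I I T₁ := Φ
  let ψ : CStarMatrix I I T₁ →⋆ₐ[ℂ] Matrix I I T₁ := Φ.symm
  have hψ : Continuous ψ := CStarMatrix.ofMatrixL.symm.continuous
  have hrep := (h₁.induced h₂.action_mul hs).map φ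
  have hexp : IsFaithfulExpectation (ψ.comp (φ.comp (inducedDiagonal α s ι₁)))
      (ψ ∘ φ ∘ inducedMatrix s u₁) (inducedExpectation α s E₁) := hE₁.induced α
  obtain ⟨f, hf, hfι, hfu⟩ :=
    h₂.exists_injective_starAlgHom hrep (hexp.of_comp hψ Φ.symm.injective)
  exact ⟨ψ.comp f, Φ.symm.injective.comp hf, fun a => congrArg ψ (hfι a),
    fun g => congrArg ψ (hfu g)⟩

/-- If `G₁ ≤ G₂` has finite index `n` and `G₂` acts on a unital
C*-algebra `A`, then the reduced crossed product `A ⋊ᵣ G₂` embeds into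
`(A ⋊ᵣ G₁) ⊗ Mₙ(ℂ) ≅ Mₙ(A ⋊ᵣ G₁)`. -/
theorem reduced_crossedProduct_embeds_matrix
    {G₂ : Type*} [Group G₂] (G₁ : Subgroup G₂) (n : ℕ) (hn : n ≠ 0)
    (hidx : G₁.index = n)
    {A T₂ T₁ : Type*} [CStarAlgebra A] [CStarAlgebra T₂] [CStarAlgebra T₁]
    (α : G₂ → A ≃⋆ₐ[ℂ] A)
    (ι₂ : A →⋆ₐ[ℂ] T₂) (u₂ : G₂ → T₂)
    (h₂ : IsReducedCrossedProduct G₂ α ι₂ u₂)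
    (ι₁ : A →⋆ₐ[ℂ] T₁) (u₁ : ↥G₁ → T₁)
    (h₁ : IsReducedCrossedProduct ↥G₁ (fun g : ↥G₁ => α g) ι₁ u₁) :
    ∃ f : T₂ →⋆ₐ[ℂ] Matrix (Fin n) (Fin n) T₁, Function.Injective f := by
  let := CStarAlgebra.spectralOrder A
  have := CStarAlgebra.spectralOrderedRing A
  obtain ⟨s, hs⟩ := exists_leftCoset_representatives hn hidx
  obtain ⟨E₁, hE₁⟩ := h₁.exists_isFaithfulExpectation
  obtain ⟨f, hf, -⟩ :=
    reduced_crossedProduct_embeds_matrix_general h₂ h₁.isCovariantRep hE₁ hs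
  exact ⟨f, hf⟩
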